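/- Let K be an algebraically closed field of characteristic 0, let f and g be nonconstant, relatively prime polynomials in K[t] with deg f ≥ deg g, set A = f² − g², B = 2fg, C = f² + g², and let w be a nonzero constant polynomial. Suppose the leading term of f² equals the negative of the leading term of g² (i.e., deg f = deg g and (leadingCoeff f)² = −(leadingCoeff g)²). If (x, y, z) is a solution in positive integers of (wA)^x + (wB)^y = (wC)^z, then x ≤ 2 and y ≤ 2. -/

import Mathlib

open Polynomial

/-!
If `deg f = deg g` and the leading terms of `f²` and `g²` cancel in `f² + g²`, then `A = f² - g²`
and `B = 2fg` both have degree `n = 2 deg f`, while `C = f² + g²` has degree less than `n`.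
Multiplying by the constant `w` changes neither these degrees nor the coprimality of `A` and `B`,
so the Mason–Stothers theorem applied to `(wA)^x + (wB)^y = (wC)^z` gives
`max (x n) (y n) < deg A + deg B + deg C < 3 n`.
-/

section MasonStothers

open UniqueFactorizationMonoid

variable {K : Type*} [Field K]

theorem natDegree_radical_mul_le [DecidableEq K] (p q : K[X]) :
    (radical (p * q)).natDegree ≤ (radical p).natDegree + (radical q).natDegree :=
  (natDegree_le_of_dvd radical_mul_dvd (mul_ne_zero radical_ne_zero radical_ne_zero)).trans
    natDegree_mul_le

theorem natDegree_radical_pow_le [DecidableEq K] (p : K[X]) (n : ℕ) :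
    (radical (p ^ n)).natDegree ≤ p.natDegree :=
  (natDegree_le_of_dvd radical_pow_dvd radical_ne_zero).trans natDegree_radical_le

theorem mul_natDegree_lt_of_pow_add_pow_eq_pow [CharZero K] {p q r : K[X]} {x y z : ℕ}
    (hp : 0 < p.natDegree) (hr : r ≠ 0) (hpq : IsCoprime p q) (h : p ^ x + q ^ y = r ^ z) :
    x * p.natDegree < p.natDegree + q.natDegree + r.natDegree := by
  classical
  have hp0 : p ≠ 0 := ne_zero_of_natDegree_gt hp
  have hq0 : q ≠ 0 := by
    rintro rfl
    exact hp.ne' (natDegree_eq_zero_of_isUnit (isCoprime_zero_right.mp hpq))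
  have hrad : (radical (p ^ x * q ^ y * -r ^ z)).natDegree ≤
      p.natDegree + q.natDegree + r.natDegree :=
    calc (radical (p ^ x * q ^ y * -r ^ z)).natDegree
      _ ≤ (radical (p ^ x)).natDegree + (radical (q ^ y)).natDegree +
          (radical (-r ^ z)).natDegree :=
        (natDegree_radical_mul_le _ _).trans
          (Nat.add_le_add_right (natDegree_radical_mul_le _ _) _)
      _ ≤ p.natDegree + q.natDegree + r.natDegree := by
        rw [UniqueFactorizationDomain.radical_neg]
        gcongr <;> exact natDegree_radical_pow_le _ _
  rw [← natDegree_pow]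
  rcases Polynomial.abc (pow_ne_zero x hp0) (pow_ne_zero y hq0)
      (neg_ne_zero.mpr (pow_ne_zero z hr)) hpq.pow (by rw [h, add_neg_cancel])
    with ⟨hlt, -, -⟩ | ⟨hderiv, -, -⟩
  · exact Nat.lt_of_succ_le (hlt.trans hrad)
  · rw [derivative_eq_zero.mp hderiv]
    lia

theorem le_two_of_pow_add_pow_eq_pow [CharZero K] {p q r : K[X]} {x y z : ℕ}
    (hr : r ≠ 0) (hpq : IsCoprime p q) (hqp : q.natDegree ≤ p.natDegree)
    (hrp : r.natDegree < p.natDegree) (h : p ^ x + q ^ y = r ^ z) : x ≤ 2 := by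
  have hlt : x * p.natDegree < 3 * p.natDegree := by
    have := mul_natDegree_lt_of_pow_add_pow_eq_pow (Nat.zero_lt_of_lt hrp) hr hpq h
    lia
  exact Nat.le_of_lt_succ (Nat.lt_of_mul_lt_mul_right hlt)

end MasonStothers

section CancellingLeadingTerms

variable {R : Type*}

theorem natDegree_add_lt_of_leadingCoeff_eq_neg [Ring R] {p q : R[X]} (hpq : p + q ≠ 0)
    (hdeg : p.natDegree = q.natDegree) (hlead : p.leadingCoeff = -q.leadingCoeff) :
    (p + q).natDegree < p.natDegree := by
  have hp : p ≠ 0 := by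
    rintro rfl
    rw [leadingCoeff_zero, zero_eq_neg, leadingCoeff_eq_zero] at hlead
    exact hpq (by rw [hlead, add_zero])
  have hq : q ≠ 0 := by
    rintro rfl
    rw [leadingCoeff_zero, neg_zero, leadingCoeff_eq_zero] at hlead
    exact hp hlead
  have hdeg' : p.degree = (-q).degree := by
    rw [degree_neg, degree_eq_natDegree hp, degree_eq_natDegree hq, hdeg]
  refine natDegree_lt_natDegree hpq ?_
  rw [← sub_neg_eq_add]
  exact degree_sub_lt_left hdeg' hp (by rwa [leadingCoeff_neg])

theorem natDegree_sub_eq_left_of_natDegree_add_lt [CommRing R] [NoZeroDivisors R] [NeZero (2 : R)]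
    {p q : R[X]} (h : (p + q).natDegree < p.natDegree) : (p - q).natDegree = p.natDegree := by
  have htwo : (C 2 * p).natDegree = p.natDegree := natDegree_C_mul two_ne_zero
  rw [show p - q = C 2 * p - (p + q) by rw [C_ofNat]; ring,
    natDegree_sub_eq_left_of_natDegree_lt (by rwa [htwo]), htwo]

end CancellingLeadingTerms

section PythagoreanTriple

theorem isCoprime_sq_sub_sq_two_mul_mul {R : Type*} [CommRing R] {a b : R} (h2 : IsUnit (2 : R))
    (hab : IsCoprime a b) : IsCoprime (a ^ 2 - b ^ 2) (2 * a * b) := by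
  have ha : IsCoprime (a ^ 2 - b ^ 2) a := by
    rw [show a ^ 2 - b ^ 2 = -b ^ 2 + a * a by ring]
    exact hab.symm.pow_left.neg_left.add_mul_left_left a
  have hb : IsCoprime (a ^ 2 - b ^ 2) b := by
    rw [show a ^ 2 - b ^ 2 = a ^ 2 + b * -b by ring]
    exact hab.pow_left.add_mul_left_left (-b)
  rw [mul_assoc, isCoprime_mul_unit_left_right h2]
  exact ha.mul_right hb

theorem sq_add_sq_ne_zero_of_isCoprime {R : Type*} [CommRing R] {a b : R}
    (ha : ¬IsUnit a) (hab : IsCoprime a b) : a ^ 2 + b ^ 2 ≠ 0 := by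
  intro h
  have hcop : IsCoprime (b ^ 2 + a * a) a := hab.symm.pow_left.add_mul_left_left a
  rw [show b ^ 2 + a * a = 0 by linear_combination h] at hcop
  exact ha (isCoprime_zero_left.mp hcop)

theorem natDegree_two_mul_mul_eq_natDegree_sq {R : Type*} [Ring R] [NoZeroDivisors R]
    [NeZero (2 : R)] {f g : R[X]} (hf : f ≠ 0) (hg : g ≠ 0) (hdeg : f.natDegree = g.natDegree) :
    (2 * f * g).natDegree = (f ^ 2).natDegree := by
  rw [mul_assoc, ← C_ofNat, natDegree_C_mul two_ne_zero, natDegree_mul hf hg, natDegree_pow,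
    ← hdeg, two_mul]

end PythagoreanTriple

theorem jesmanowicz_poly_bounds_case2_general {K : Type*} [Field K] [CharZero K] {f g w : K[X]}
    (hf : 0 < f.natDegree) (hfg : IsCoprime f g) (hw : w ≠ 0) (hwc : w.natDegree = 0)
    (hdeg : f.natDegree = g.natDegree) (hlead : f.leadingCoeff ^ 2 = -g.leadingCoeff ^ 2)
    {x y z : ℕ}
    (heq : (w * (f ^ 2 - g ^ 2)) ^ x + (w * (2 * f * g)) ^ y = (w * (f ^ 2 + g ^ 2)) ^ z) :
    x ≤ 2 ∧ y ≤ 2 := by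
  obtain ⟨c, rfl⟩ := natDegree_eq_zero.mp hwc
  have hc : c ≠ 0 := C_ne_zero.mp hw
  have htwo : IsUnit (2 : K[X]) := C_ofNat (R := K) 2 ▸ isUnit_C.mpr (IsUnit.mk0 2 two_ne_zero)
  have hcop : IsCoprime (C c * (f ^ 2 - g ^ 2)) (C c * (2 * f * g)) :=
    (isCoprime_mul_unit_left (isUnit_C.mpr hc.isUnit) _ _).mpr
      (isCoprime_sq_sub_sq_two_mul_mul htwo hfg)
  have hC0 : f ^ 2 + g ^ 2 ≠ 0 :=
    sq_add_sq_ne_zero_of_isCoprime (not_isUnit_of_natDegree_pos f hf) hfg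
  have hCdeg : (f ^ 2 + g ^ 2).natDegree < (f ^ 2).natDegree :=
    natDegree_add_lt_of_leadingCoeff_eq_neg hC0 (by rw [natDegree_pow, natDegree_pow, hdeg])
      (by rwa [leadingCoeff_pow, leadingCoeff_pow])
  have hAdeg : (f ^ 2 - g ^ 2).natDegree = (f ^ 2).natDegree :=
    natDegree_sub_eq_left_of_natDegree_add_lt hCdeg
  have hBdeg : (2 * f * g).natDegree = (f ^ 2).natDegree :=
    natDegree_two_mul_mul_eq_natDegree_sq (ne_zero_of_natDegree_gt hf)
      (ne_zero_of_natDegree_gt (hdeg ▸ hf)) hdeg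
  have hwC0 : C c * (f ^ 2 + g ^ 2) ≠ 0 := mul_ne_zero hw hC0
  constructor
  · exact le_two_of_pow_add_pow_eq_pow hwC0 hcop
      (by simp only [natDegree_C_mul hc, hAdeg, hBdeg, le_refl])
      (by simpa only [natDegree_C_mul hc, hAdeg] using hCdeg) heq
  · exact le_two_of_pow_add_pow_eq_pow hwC0 hcop.symm
      (by simp only [natDegree_C_mul hc, hAdeg, hBdeg, le_refl])
      (by simpa only [natDegree_C_mul hc, hBdeg] using hCdeg) ((add_comm _ _).trans heq)

theorem jesmanowicz_poly_bounds_case2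
    {K : Type*} [Field K] [CharZero K] [IsAlgClosed K]
    (f g w : K[X])
    (hf : 0 < f.natDegree) (hg : 0 < g.natDegree)
    (hdeg : g.natDegree ≤ f.natDegree)
    (hfg : IsCoprime f g) (hw : w ≠ 0) (hwc : w.natDegree = 0)
    (hLT : f.natDegree = g.natDegree ∧ f.leadingCoeff ^ 2 = -g.leadingCoeff ^ 2)
    (x y z : ℕ) (hx : 0 < x) (hy : 0 < y) (hz : 0 < z)
    (heq : (w * (f ^ 2 - g ^ 2)) ^ x + (w * (2 * f * g)) ^ y = (w * (f ^ 2 + g ^ 2)) ^ z) :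
    x ≤ 2 ∧ y ≤ 2 :=
  jesmanowicz_poly_bounds_case2_general hf hfg hw hwc hLT.1 hLT.2 heq
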